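/- arXiv:2111.08754 — 2 statements merged into one kernel-verified Lean document; each statement's English description precedes it below -/
import Mathlib

section
/- For every m with 1 ≤ m ≤ n and every j with 1 ≤ j ≤ k, define for nonnegative integers r, s with r+s = m the polynomial A^{(rs)}_j = Σ_{d=0}^{j−1}(j+r−2d−1)·p_d·p_{j+r−d−1}·q_s + (j+s−1)·(Σ_{d=0}^{j−1} p_d·q_{j+s−d−1})·p_r. Then Σ_{r+s=m, r,s≥0} A^{(rs)}_j lies in the ideal I. -/
open MvPolynomial Finset

/-- The polynomial ring `P = ℂ[p_1,…,p_k,q_1,…,q_{n-k}]`: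
the variable `Sum.inl j` is `p_{j+1}` and `Sum.inr l` is `q_{l+1}`. -/
abbrev PR (n k : ℕ) := MvPolynomial (Fin k ⊕ Fin (n - k)) ℂ

/-- `pZ n k a` is the Chern class generator `p_a`, with the conventions `p_0 = 1`
and `p_a = 0` for `a < 0` or `a > k`. -/
noncomputable def pZ (n k : ℕ) (a : ℤ) : PR n k :=
  if a = 0 then 1
  else if h : 1 ≤ a ∧ a ≤ (k : ℤ) then
    MvPolynomial.X (Sum.inl ⟨(a - 1).toNat, by omega⟩)
  else 0

/-- `qZ n k a` is the Chern class generator `q_a`, with the conventions `q_0 = 1`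
and `q_a = 0` for `a < 0` or `a > n-k`. -/
noncomputable def qZ (n k : ℕ) (a : ℤ) : PR n k :=
  if a = 0 then 1
  else if h : 1 ≤ a ∧ a ≤ ((n - k : ℕ) : ℤ) then
    MvPolynomial.X (Sum.inr ⟨(a - 1).toNat, by omega⟩)
  else 0

/-- `R_m = Σ_{r+s=m, r,s ≥ 0} p_r q_s`. -/
noncomputable def Rm (n k : ℕ) (m : ℕ) : PR n k :=
  ∑ x ∈ Finset.HasAntidiagonal.antidiagonal m, pZ n k x.1 * qZ n k x.2

/-- The ideal `I ⊆ P` generated by `R_1, …, R_n`. -/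
noncomputable def Igr (n k : ℕ) : Ideal (PR n k) :=
  Ideal.span ((fun m => Rm n k m) '' (Finset.Icc 1 n : Finset ℕ))

/-- Multiplication by `g` as a linear endomorphism of `P`. -/
noncomputable def Mop (n k : ℕ) (g : PR n k) : Module.End ℂ (PR n k) :=
  LinearMap.mulLeft ℂ g

/-- The partial derivative with respect to the variable `i`, as a linear endomorphism. -/
noncomputable def Pd (n k : ℕ) (i : Fin k ⊕ Fin (n - k)) : Module.End ℂ (PR n k) :=
  (MvPolynomial.pderiv i).toLinearMap

/-- `A^{(rs)}_j = Σ_{d=0}^{j-1}(j+r-2d-1)·p_d·p_{j+r-d-1}·q_s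
               + (j+s-1)·(Σ_{d=0}^{j-1} p_d·q_{j+s-d-1})·p_r`. -/
noncomputable def Apoly (n k : ℕ) (j r s : ℕ) : PR n k :=
  (∑ d ∈ Finset.range j, (((j : ℂ) + (r : ℕ) - 2 * (d : ℕ) - 1)) •
      (pZ n k (d : ℕ) * pZ n k ((j : ℤ) + (r : ℕ) - (d : ℕ) - 1) * qZ n k (s : ℕ)))
  + ((j : ℂ) + (s : ℕ) - 1) •
      ((∑ d ∈ Finset.range j, pZ n k (d : ℕ) * qZ n k ((j : ℤ) + (s : ℕ) - (d : ℕ) - 1))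
        * pZ n k (r : ℕ))

theorem aux_split {A : Type*} [CommRing A] (f : ℕ → ℕ → A) (m u : ℕ) :
    ∑ x ∈ antidiagonal (m + u), f x.1 x.2 =
      ∑ x ∈ antidiagonal m, f (u + x.1) x.2 + ∑ i ∈ range u, f i (m + u - i) := by
  rw [Finset.Nat.sum_antidiagonal_eq_sum_range_succ_mk,
    Finset.Nat.sum_antidiagonal_eq_sum_range_succ_mk]
  have h : (m + u).succ = u + m.succ := by omega
  rw [h, Finset.sum_range_add, add_comm]
  congr 1
  apply Finset.sum_congr rfl
  intro i _
  have : m + u - (u + i) = m - i := by omega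
  simp only [this]

theorem aux_split' {A : Type*} [CommRing A] (f : ℕ → ℕ → A) (m u : ℕ) :
    ∑ x ∈ antidiagonal (m + u), f x.1 x.2 =
      ∑ x ∈ antidiagonal m, f x.1 (u + x.2) + ∑ i ∈ range u, f (m + u - i) i := by
  have h := aux_split (fun a b => f b a) m u
  rw [← Finset.Nat.sum_antidiagonal_swap] at h
  simp only [Prod.fst_swap, Prod.snd_swap] at h
  rw [h, ← Finset.Nat.sum_antidiagonal_swap (n := m)]
  simp only [Prod.fst_swap, Prod.snd_swap]

theorem aux_flip {A : Type*} [CommRing A] (f : ℕ → ℕ → A) (J : ℕ) :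
    ∑ d ∈ range (J + 1), ∑ i ∈ range (J - d), f d i =
      ∑ t ∈ range J, ∑ x ∈ antidiagonal t, f x.1 x.2 := by
  rw [Finset.sum_range_succ]
  simp only [Nat.sub_self, Finset.range_zero, Finset.sum_empty, add_zero]
  rw [← Finset.sum_range_diag_flip]
  apply Finset.sum_congr rfl
  intro t _
  rw [Finset.Nat.sum_antidiagonal_eq_sum_range_succ_mk]

theorem aux_main {A : Type*} [CommRing A] (I : Ideal A) (p q : ℕ → A)
    (hR : ∀ t, 1 ≤ t → ∑ x ∈ antidiagonal t, p x.1 * q x.2 ∈ I) (m J : ℕ) (hm : 1 ≤ m) :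
    ∑ d ∈ range (J + 1), p d *
      (∑ x ∈ antidiagonal m, (((J - d + x.1 : ℕ) : A) - d) * (p (J - d + x.1) * q x.2)
        + ∑ x ∈ antidiagonal m, (((J - d + x.2 : ℕ) : A) + d) * (p x.1 * q (J - d + x.2)))
      ∈ I := by
  have key : ∀ d ∈ range (J + 1), p d *
      (∑ x ∈ antidiagonal m, (((J - d + x.1 : ℕ) : A) - d) * (p (J - d + x.1) * q x.2)
        + ∑ x ∈ antidiagonal m, (((J - d + x.2 : ℕ) : A) + d) * (p x.1 * q (J - d + x.2)))
      = p d * (((m + (J - d) : ℕ) : A) * ∑ x ∈ antidiagonal (m + (J - d)), p x.1 * q x.2)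
        - ∑ i ∈ range (J - d), ((i : A) - d) * (p d * p i * q (m + J - (d + i)))
        - ∑ i ∈ range (J - d), ((d + i : ℕ) : A) * (p (m + J - (d + i)) * (p d * q i)) := by
    intro d hd
    have hd' : d ≤ J := by simpa [Nat.lt_succ_iff] using hd
    have h1 := aux_split (fun a b => ((a : A) - d) * (p a * q b)) m (J - d)
    have h2 := aux_split' (fun a b => ((b : A) + d) * (p a * q b)) m (J - d)
    have h3 : ((m + (J - d) : ℕ) : A) * ∑ x ∈ antidiagonal (m + (J - d)), p x.1 * q x.2
        = ∑ x ∈ antidiagonal (m + (J - d)), ((x.1 : A) - d) * (p x.1 * q x.2)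
        + ∑ x ∈ antidiagonal (m + (J - d)), ((x.2 : A) + d) * (p x.1 * q x.2) := by
      rw [← Finset.sum_add_distrib, Finset.mul_sum]
      apply Finset.sum_congr rfl
      intro x hx
      rw [← Finset.HasAntidiagonal.mem_antidiagonal.1 hx]
      push_cast
      ring
    have h4 : ∑ i ∈ range (J - d), ((i : A) - d) * (p d * p i * q (m + J - (d + i)))
        = p d * ∑ i ∈ range (J - d), ((i : A) - d) * (p i * q (m + (J - d) - i)) := by
      rw [Finset.mul_sum]
      apply Finset.sum_congr rfl
      intro i _
      have : m + J - (d + i) = m + (J - d) - i := by omega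
      rw [this]
      ring
    have h5 : ∑ i ∈ range (J - d), ((d + i : ℕ) : A) * (p (m + J - (d + i)) * (p d * q i))
        = p d * ∑ i ∈ range (J - d), ((i : A) + d) * (p (m + (J - d) - i) * q i) := by
      rw [Finset.mul_sum]
      apply Finset.sum_congr rfl
      intro i _
      have : m + J - (d + i) = m + (J - d) - i := by omega
      rw [this]
      push_cast
      ring
    rw [h3, h4, h5, h1, h2]
    ring
  rw [Finset.sum_congr rfl key, Finset.sum_sub_distrib, Finset.sum_sub_distrib]
  refine I.sub_mem (I.sub_mem ?_ ?_) ?_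
  · refine I.sum_mem fun d _ => I.mul_mem_left _ (I.mul_mem_left _ (hR _ (by omega)))
  · rw [aux_flip (fun d i => ((i : A) - d) * (p d * p i * q (m + J - (d + i))))]
    refine I.sum_mem fun t _ => ?_
    have : ∑ x ∈ antidiagonal t, ((x.2 : A) - x.1) * (p x.1 * p x.2 * q (m + J - (x.1 + x.2)))
        = 0 := by
      simp only [sub_mul, Finset.sum_sub_distrib]
      rw [sub_eq_zero, ← Finset.Nat.sum_antidiagonal_swap]
      apply Finset.sum_congr rfl
      intro x _
      simp only [Prod.fst_swap, Prod.snd_swap, add_comm x.2 x.1, mul_comm (p x.2) (p x.1)]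
    rw [this]
    exact I.zero_mem
  · rw [aux_flip (fun d i => ((d + i : ℕ) : A) * (p (m + J - (d + i)) * (p d * q i)))]
    refine I.sum_mem fun t _ => ?_
    have : ∑ x ∈ antidiagonal t, ((x.1 + x.2 : ℕ) : A) *
          (p (m + J - (x.1 + x.2)) * (p x.1 * q x.2))
        = (t : A) * p (m + J - t) * ∑ x ∈ antidiagonal t, p x.1 * q x.2 := by
      rw [Finset.mul_sum]
      apply Finset.sum_congr rfl
      intro x hx
      rw [Finset.HasAntidiagonal.mem_antidiagonal.1 hx]
      ring
    rw [this]
    rcases Nat.eq_zero_or_pos t with rfl | ht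
    · simp
    · exact I.mul_mem_left _ (hR t ht)

theorem Rm_mem (n k : ℕ) (hk : k ≤ n) (t : ℕ) (ht : 1 ≤ t) : Rm n k t ∈ Igr n k := by
  by_cases h : t ≤ n
  · exact Ideal.subset_span ⟨t, by simp [ht, h], rfl⟩
  · have : Rm n k t = 0 := by
      unfold Rm
      apply Finset.sum_eq_zero
      intro x hx
      have hx := Finset.HasAntidiagonal.mem_antidiagonal.1 hx
      by_cases h1 : x.1 ≤ k
      · have : qZ n k x.2 = 0 := by
          unfold qZ
          rw [if_neg (by omega), dif_neg (by omega)]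
        rw [this, mul_zero]
      · have : pZ n k x.1 = 0 := by
          unfold pZ
          rw [if_neg (by omega), dif_neg (by omega)]
        rw [this, zero_mul]
    rw [this]
    exact Ideal.zero_mem _

/-- For every `1 ≤ m ≤ n` and `1 ≤ j ≤ k`, the sum `Σ_{r+s=m, r,s ≥ 0} A^{(rs)}_j`
lies in the ideal `I`. -/
theorem sum_A_mem_ideal (n k : ℕ) (hk1 : 1 ≤ k) (hk2 : k ≤ n - 1)
    (m : ℕ) (hm1 : 1 ≤ m) (hm2 : m ≤ n) (j : ℕ) (hj1 : 1 ≤ j) (hj2 : j ≤ k) :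
    ∑ x ∈ Finset.HasAntidiagonal.antidiagonal m, Apoly n k j x.1 x.2 ∈ Igr n k := by
  obtain ⟨J, rfl⟩ : ∃ J, j = J + 1 := ⟨j - 1, by omega⟩
  have h := aux_main (Igr n k) (fun a => pZ n k a) (fun a => qZ n k a)
    (fun t ht => Rm_mem n k (by omega) t ht) m J hm1
  convert h using 1
  simp only [Apoly, mul_add, Finset.mul_sum, Finset.sum_mul, Finset.smul_sum,
    Finset.sum_add_distrib]
  congr 1
  · rw [Finset.sum_comm]
    refine Finset.sum_congr rfl fun d hd => Finset.sum_congr rfl fun x _ => ?_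
    have hd' : d ≤ J := by simpa [Nat.lt_succ_iff] using hd
    have e : ((J + 1 : ℕ) : ℤ) + (x.1 : ℕ) - (d : ℕ) - 1 = ((J - d + x.1 : ℕ) : ℤ) := by omega
    have c : ((J + 1 : ℕ) : ℂ) + (x.1 : ℕ) - 2 * (d : ℕ) - 1
        = ((J - d + x.1 : ℕ) : ℂ) - (d : ℂ) := by
      push_cast [Nat.cast_sub hd']
      ring
    rw [e, c, MvPolynomial.smul_eq_C_mul, map_sub, map_natCast, map_natCast]
    ring
  · rw [Finset.sum_comm]
    refine Finset.sum_congr rfl fun d hd => Finset.sum_congr rfl fun x _ => ?_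
    have hd' : d ≤ J := by simpa [Nat.lt_succ_iff] using hd
    have e : ((J + 1 : ℕ) : ℤ) + (x.2 : ℕ) - (d : ℕ) - 1 = ((J - d + x.2 : ℕ) : ℤ) := by omega
    have c : ((J + 1 : ℕ) : ℂ) + (x.2 : ℕ) - 1
        = ((J - d + x.2 : ℕ) : ℂ) + (d : ℂ) := by
      push_cast [Nat.cast_sub hd']
      ring
    rw [e, c, MvPolynomial.smul_eq_C_mul, map_add, map_natCast, map_natCast]
    ring
end

section
/- The quotient algebra A = P/I is a finite-dimensional ℂ-vector space of dimension equal to the binomial coefficient C(n,k); that is, dim_ℂ(P/I) = n!/(k!(n−k)!). (This is the vector-space content of the isomorphism of the cohomology ring H*(Gr(k,n),ℂ) of the complex Grassmannian with the k-th exterior power of the standard n-dimensional representation.) -/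
open MvPolynomial Finset

/-- `A` (with structure map `ι : R → A`) is universal for factorizations `f = g * h`
with `g`, `h` monic and `g` of degree `k`. -/
structure IsUnivFact {R A : Type} [CommRing R] [CommRing A] (k : ℕ) (f : Polynomial R)
    (ι : R →+* A) (g h : Polynomial A) : Prop where
  monic_g : g.Monic
  monic_h : h.Monic
  deg_g : g.natDegree = k
  fac : f.map ι = g * h
  univ : ∀ (S : Type) [CommRing S] [Nontrivial S] (ρ : R →+* S) (g' h' : Polynomial S),
    g'.Monic → h'.Monic → g'.natDegree = k → f.map ρ = g' * h' →
    ∃! φ : A →+* S, φ.comp ι = ρ ∧ g.map φ = g' ∧ h.map φ = h'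

/-- Cancellation of `X - s`. -/
lemma X_sub_cancel {S : Type} [CommRing S] (s : S) {a b : Polynomial S}
    (h : (Polynomial.X - Polynomial.C s) * a = (Polynomial.X - Polynomial.C s) * b) : a = b :=
  (Polynomial.monic_X_sub_C s).isRegular.left h

/-- Base case: for `k = 0` the structure map is bijective. -/
lemma IsUnivFact.bijective_zero {R A : Type} [CommRing R] [CommRing A] [Nontrivial A]
    {f : Polynomial R} {ι : R →+* A} {g h : Polynomial A} (hf : f.Monic)
    (H : IsUnivFact 0 f ι g h) : Function.Bijective ι := by
  have : Nontrivial R := ι.domain_nontrivial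
  have hg : g = 1 := Polynomial.eq_one_of_monic_natDegree_zero H.monic_g H.deg_g
  have hh : f.map ι = h := by rw [H.fac, hg, one_mul]
  obtain ⟨φ, ⟨h1, h2, h3⟩, -⟩ := H.univ R (RingHom.id R) 1 f Polynomial.monic_one hf
    (by simp) (by simp)
  obtain ⟨ψ, -, hψ⟩ := H.univ A ι g h H.monic_g H.monic_h H.deg_g H.fac
  have e1 := hψ (RingHom.id A) ⟨by simp, by simp, by simp⟩
  have e2 := hψ (ι.comp φ) ⟨by rw [RingHom.comp_assoc, h1, RingHom.comp_id],
    by rw [hg]; simp, by rw [← Polynomial.map_map, h3, hh]⟩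
  have e3 : ι.comp φ = RingHom.id A := e2.trans e1.symm
  constructor
  · intro a b hab
    have := congrArg φ hab
    simpa using (RingHom.congr_fun h1 a).symm.trans (this.trans (RingHom.congr_fun h1 b))
  · intro a
    exact ⟨φ a, RingHom.congr_fun e3 a⟩

/-- Adjoining a root of the universal factor `g` gives the universal factorization ring of
`f / (X - x)` over `R[x]/(f)`. -/
lemma IsUnivFact.step {R A : Type} [CommRing R] [CommRing A]
    {k : ℕ} {f : Polynomial R} {ι : R →+* A} {g h : Polynomial A}
    (H : IsUnivFact (k + 1) f ι g h) [Nontrivial (AdjoinRoot g)]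
    (f' : Polynomial (AdjoinRoot f))
    (hf' : (Polynomial.X - Polynomial.C (AdjoinRoot.root f)) * f' = f.map (AdjoinRoot.of f))
    (j : AdjoinRoot f →+* AdjoinRoot g)
    (hj : j.comp (AdjoinRoot.of f) = (AdjoinRoot.of g).comp ι)
    (hjr : j (AdjoinRoot.root f) = AdjoinRoot.root g)
    (g' : Polynomial (AdjoinRoot g))
    (hg' : (Polynomial.X - Polynomial.C (AdjoinRoot.root g)) * g' = g.map (AdjoinRoot.of g)) :
    IsUnivFact k f' j g' (h.map (AdjoinRoot.of g)) := by
  have mg' : g'.Monic := (Polynomial.monic_X_sub_C (AdjoinRoot.root g)).of_mul_monic_left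
    (hg' ▸ H.monic_g.map _)
  refine ⟨mg', H.monic_h.map _, ?_, ?_, ?_⟩
  · have := congrArg Polynomial.natDegree hg'
    rw [(Polynomial.monic_X_sub_C _).natDegree_mul mg', H.monic_g.natDegree_map, H.deg_g,
      Polynomial.natDegree_X_sub_C] at this
    omega
  · apply X_sub_cancel (AdjoinRoot.root g)
    rw [← mul_assoc, hg', ← Polynomial.map_mul, ← H.fac, Polynomial.map_map, ← hj,
      ← Polynomial.map_map, ← hf', Polynomial.map_mul]
    simp [hjr]
  · intro S _ _ ρ g₁ h₁ mg₁ mh₁ dg₁ fac₁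
    set s := ρ (AdjoinRoot.root f) with hs
    have hfS : f.map (ρ.comp (AdjoinRoot.of f)) =
        ((Polynomial.X - Polynomial.C s) * g₁) * h₁ := by
      rw [← Polynomial.map_map, ← hf', Polynomial.map_mul, fac₁, mul_assoc]
      simp [hs]
    obtain ⟨φ, ⟨h1, h2, h3⟩, hu⟩ := H.univ S (ρ.comp (AdjoinRoot.of f))
      ((Polynomial.X - Polynomial.C s) * g₁) h₁ ((Polynomial.monic_X_sub_C s).mul mg₁) mh₁
      (by rw [(Polynomial.monic_X_sub_C s).natDegree_mul mg₁, Polynomial.natDegree_X_sub_C, dg₁,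
        add_comm]) hfS
    have hroot : g.eval₂ φ s = 0 := by
      rw [← Polynomial.eval_map, h2]; simp
    refine ⟨AdjoinRoot.lift φ s hroot, ⟨?_, ?_, ?_⟩, ?_⟩
    · apply AdjoinRoot.ringHom_ext
      · rw [RingHom.comp_assoc, hj, ← RingHom.comp_assoc, AdjoinRoot.lift_comp_of, h1]
      · simp [hjr, hs]
    · apply X_sub_cancel s
      have e := congrArg (Polynomial.map (AdjoinRoot.lift φ s hroot)) hg'
      rw [Polynomial.map_map, AdjoinRoot.lift_comp_of, h2, Polynomial.map_mul] at e
      rw [← e]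
      simp
    · rw [Polynomial.map_map, AdjoinRoot.lift_comp_of, h3]
    · rintro ψ ⟨k1, k2, k3⟩
      have hψr : ψ (AdjoinRoot.root g) = s := by
        rw [← hjr, hs, ← k1]; rfl
      have := hu (ψ.comp (AdjoinRoot.of g)) ⟨by rw [RingHom.comp_assoc, ← hj,
        ← RingHom.comp_assoc, k1], by
          rw [← Polynomial.map_map, ← hg', Polynomial.map_mul, k2]; simp [hψr],
          by rw [← Polynomial.map_map, k3]⟩
      apply AdjoinRoot.ringHom_ext
      · rw [this, AdjoinRoot.lift_comp_of]
      · simp [hψr]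

lemma finrank_adjoinRoot {A : Type} [CommRing A] [Nontrivial A] {g : Polynomial A}
    (hg : g.Monic) : Module.finrank A (AdjoinRoot g) = g.natDegree := by
  rw [(AdjoinRoot.powerBasis' hg).finrank, AdjoinRoot.powerBasis'_dim]

lemma finrank_adjoinRoot_C {A : Type} [CommRing A] [Nontrivial A] [Algebra ℂ A]
    {g : Polynomial A} (hg : g.Monic) :
    Module.finrank ℂ (AdjoinRoot g) = Module.finrank ℂ A * g.natDegree := by
  have := hg.free_adjoinRoot
  rw [← finrank_adjoinRoot hg, Module.finrank_mul_finrank]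

/-- The main dimension count. -/
theorem IsUnivFact.finrank (k : ℕ) : ∀ {R A : Type} [CommRing R] [CommRing A] [Nontrivial A]
    [Algebra ℂ R] [Algebra ℂ A] {f : Polynomial R} {ι : R →+* A} {g h : Polynomial A},
    Module.Finite ℂ R → f.Monic → ι.comp (algebraMap ℂ R) = algebraMap ℂ A →
    IsUnivFact k f ι g h →
    Module.Finite ℂ A ∧
      Module.finrank ℂ A = Nat.choose f.natDegree k * Module.finrank ℂ R := by
  induction k with
  | zero =>
    intro R A _ _ _ _ _ f ι g h hR hf hι H
    let e : R ≃ₗ[ℂ] A := LinearEquiv.ofBijective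
      ({ ι with commutes' := fun c => RingHom.congr_fun hι c } : R →ₐ[ℂ] A).toLinearMap
      (H.bijective_zero hf)
    exact ⟨Module.Finite.equiv e, by rw [← e.finrank_eq]; simp⟩
  | succ k ih =>
    intro R A _ _ _ _ _ f ι g h hR hf hι H
    have : Nontrivial R := ι.domain_nontrivial
    have := H.monic_g.free_adjoinRoot
    have := hf.free_adjoinRoot
    have : Module.Finite R (AdjoinRoot f) := hf.finite_adjoinRoot
    have : Nontrivial (AdjoinRoot g) := by
      by_contra hn
      rw [not_nontrivial_iff_subsingleton] at hn
      have := finrank_adjoinRoot H.monic_g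
      rw [Module.finrank_zero_of_subsingleton, H.deg_g] at this
      omega
    have hroot : f.eval₂ ((AdjoinRoot.of g).comp ι) (AdjoinRoot.root g) = 0 := by
      rw [← Polynomial.eval₂_map, H.fac, Polynomial.eval₂_mul, AdjoinRoot.eval₂_root, zero_mul]
    let j : AdjoinRoot f →+* AdjoinRoot g := AdjoinRoot.lift _ _ hroot
    have : Nontrivial (AdjoinRoot f) := j.domain_nontrivial
    have hj : j.comp (AdjoinRoot.of f) = (AdjoinRoot.of g).comp ι := AdjoinRoot.lift_comp_of hroot
    have hjr : j (AdjoinRoot.root f) = AdjoinRoot.root g := AdjoinRoot.lift_root hroot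
    have hf' := Polynomial.mul_divByMonic_eq_iff_isRoot.2 (AdjoinRoot.isRoot_root f)
    have hg' := Polynomial.mul_divByMonic_eq_iff_isRoot.2 (AdjoinRoot.isRoot_root g)
    set f' := f.map (AdjoinRoot.of f) /ₘ (Polynomial.X - Polynomial.C (AdjoinRoot.root f))
    have mf' : f'.Monic := (Polynomial.monic_X_sub_C (AdjoinRoot.root f)).of_mul_monic_left
      (hf' ▸ hf.map _)
    have df' : f'.natDegree + 1 = f.natDegree := by
      have := congrArg Polynomial.natDegree hf'
      rw [(Polynomial.monic_X_sub_C _).natDegree_mul mf', hf.natDegree_map,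
        Polynomial.natDegree_X_sub_C] at this
      omega
    have step := H.step f' hf' j hj hjr _ hg'
    have hfin : Module.Finite ℂ (AdjoinRoot f) := Module.Finite.trans R _
    have hC : j.comp (algebraMap ℂ (AdjoinRoot f)) = algebraMap ℂ (AdjoinRoot g) := by
      rw [IsScalarTower.algebraMap_eq ℂ R (AdjoinRoot f),
        IsScalarTower.algebraMap_eq ℂ A (AdjoinRoot g), ← hι]
      rw [← RingHom.comp_assoc, ← RingHom.comp_assoc]
      exact congrArg (fun t : R →+* AdjoinRoot g => t.comp (algebraMap ℂ R)) hj
    obtain ⟨F, D⟩ := ih hfin mf' hC step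
    rw [finrank_adjoinRoot_C H.monic_g, finrank_adjoinRoot_C hf, H.deg_g] at D
    refine ⟨Module.Finite.of_injective (IsScalarTower.toAlgHom ℂ A (AdjoinRoot g)).toLinearMap
      (FaithfulSMul.algebraMap_injective A (AdjoinRoot g)), ?_⟩
    rw [← df'] at D ⊢
    have hc := Nat.add_one_mul_choose_eq f'.natDegree k
    apply Nat.eq_of_mul_eq_mul_right (Nat.succ_pos k)
    rw [D]
    calc _ = ((f'.natDegree + 1) * f'.natDegree.choose k) * Module.finrank ℂ R := by ring
      _ = _ := by rw [hc, Nat.succ_eq_add_one]; ring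

/-- The polynomial `∑ c_r X^r` for `r ≤ d`. -/
noncomputable def genPoly {S : Type} [CommRing S] (d : ℕ) (c : ℕ → S) : Polynomial S :=
  ∑ r ∈ Finset.range (d + 1), Polynomial.C (c r) * Polynomial.X ^ r

lemma coeff_genPoly {S : Type} [CommRing S] (d : ℕ) (c : ℕ → S) (hc : ∀ r, d < r → c r = 0)
    (r : ℕ) : (genPoly d c).coeff r = c r := by
  simp only [genPoly, Polynomial.finsetSum_coeff, Polynomial.coeff_C_mul, Polynomial.coeff_X_pow,
    mul_ite, mul_one, mul_zero]
  rw [Finset.sum_ite_eq]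
  split_ifs with h
  · rfl
  · rw [hc]; simpa using h

lemma natDegree_genPoly {S : Type} [CommRing S] (d : ℕ) (c : ℕ → S) :
    (genPoly d c).natDegree ≤ d := by
  apply Polynomial.natDegree_sum_le_of_forall_le
  intro r hr
  exact (Polynomial.natDegree_C_mul_X_pow_le _ _).trans (by simp at hr; omega)

lemma reflect_genPoly {S : Type} [CommRing S] [Nontrivial S] (d : ℕ) (c : ℕ → S)
    (hc : ∀ r, d < r → c r = 0)
    (h0 : c 0 = 1) : ((genPoly d c).reflect d).Monic ∧ ((genPoly d c).reflect d).natDegree = d := by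
  have h1 : ((genPoly d c).reflect d).natDegree ≤ d :=
    Polynomial.natDegree_reflect_le.trans (max_le le_rfl (natDegree_genPoly d c))
  have h2 : ((genPoly d c).reflect d).coeff d = 1 := by
    rw [Polynomial.coeff_reflect, Polynomial.revAt_le le_rfl, Nat.sub_self, coeff_genPoly d c hc, h0]
  exact ⟨Polynomial.monic_of_natDegree_le_of_coeff_eq_one d h1 h2,
    Polynomial.natDegree_eq_of_le_of_coeff_ne_zero h1 (by rw [h2]; exact one_ne_zero)⟩

lemma eq_of_reflect {S T : Type} [CommRing S] [CommRing T] (φ : S →+* T) (d : ℕ) (c : ℕ → S)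
    (hc : ∀ r, d < r → c r = 0) (g : Polynomial T)
    (h : ∀ r, φ (c r) = (g.reflect d).coeff r) : ((genPoly d c).reflect d).map φ = g := by
  rw [← Polynomial.reflect_map, ← Polynomial.reflect_reflect (N := d) (p := g)]
  congr 1
  ext r
  rw [Polynomial.coeff_map, coeff_genPoly d c hc, h]

lemma pZ_big (n k r : ℕ) (h : k < r) : pZ n k (r : ℤ) = 0 := by
  unfold pZ
  rw [if_neg (by omega), dif_neg (by omega)]

lemma qZ_big (n k r : ℕ) (h : n - k < r) : qZ n k (r : ℤ) = 0 := by
  unfold qZ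
  rw [if_neg (by omega), dif_neg (by omega)]

lemma pZ_succ (n k : ℕ) (i : Fin k) : pZ n k (((i : ℕ) + 1 : ℕ) : ℤ) = X (Sum.inl i) := by
  unfold pZ
  rw [if_neg (by omega), dif_pos (by omega)]
  congr 2
  ext
  simp

lemma qZ_succ (n k : ℕ) (i : Fin (n - k)) :
    qZ n k (((i : ℕ) + 1 : ℕ) : ℤ) = X (Sum.inr i) := by
  unfold qZ
  rw [if_neg (by omega), dif_pos (by omega)]
  congr 2
  ext
  simp

lemma hom_pZ {S : Type} [CommRing S] (n k : ℕ) (φ : PR n k →+* S) (g : Polynomial S)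
    (hg : g.Monic) (hd : g.natDegree = k)
    (h : ∀ i : Fin k, φ (X (Sum.inl i)) = (g.reflect k).coeff (i + 1)) (r : ℕ) :
    φ (pZ n k (r : ℤ)) = (g.reflect k).coeff r := by
  rcases r with _ | r
  · have : g.coeff k = 1 := by rw [← hd]; exact hg
    simp [pZ, Polynomial.coeff_reflect, this]
  · by_cases hr : r < k
    · rw [← h ⟨r, hr⟩, ← pZ_succ]
    · rw [pZ_big _ _ _ (by omega), map_zero, Polynomial.coeff_reflect,
        Polynomial.revAt_eq_self_of_lt (by omega), Polynomial.coeff_eq_zero_of_natDegree_lt]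
      omega

lemma hom_qZ {S : Type} [CommRing S] (n k : ℕ) (φ : PR n k →+* S) (g : Polynomial S)
    (hg : g.Monic) (hd : g.natDegree = n - k)
    (h : ∀ i : Fin (n - k), φ (X (Sum.inr i)) = (g.reflect (n - k)).coeff (i + 1)) (r : ℕ) :
    φ (qZ n k (r : ℤ)) = (g.reflect (n - k)).coeff r := by
  rcases r with _ | r
  · have : g.coeff (n - k) = 1 := by rw [← hd]; exact hg
    simp [qZ, Polynomial.coeff_reflect, this]
  · by_cases hr : r < n - k
    · rw [← h ⟨r, hr⟩, ← qZ_succ]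
    · rw [qZ_big _ _ _ (by omega), map_zero, Polynomial.coeff_reflect,
        Polynomial.revAt_eq_self_of_lt (by omega), Polynomial.coeff_eq_zero_of_natDegree_lt]
      omega

/-- The constant term map kills `I`, so the quotient is nontrivial. -/
lemma Igr_ne_top (n k : ℕ) : Igr n k ≠ ⊤ := by
  intro h
  have hle : Igr n k ≤ RingHom.ker (MvPolynomial.constantCoeff (σ := Fin k ⊕ Fin (n - k)) (R := ℂ)) := by
    rw [Igr, Ideal.span_le]
    rintro _ ⟨m, hm, rfl⟩
    simp only [Finset.coe_Icc, Set.mem_Icc] at hm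
    simp only [SetLike.mem_coe, RingHom.mem_ker, Rm, map_sum, map_mul]
    apply Finset.sum_eq_zero
    rintro ⟨a, b⟩ hab
    rw [Finset.HasAntidiagonal.mem_antidiagonal] at hab
    simp only at hab
    rcases Nat.eq_zero_or_pos a with ha | ha
    · have : constantCoeff (qZ n k (b : ℤ)) = 0 := by
        unfold qZ
        rw [if_neg (by omega)]
        split_ifs <;> simp
      simp [this]
    · have : constantCoeff (pZ n k (a : ℤ)) = 0 := by
        unfold pZ
        rw [if_neg (by omega)]
        split_ifs <;> simp
      simp [this]
  rw [h] at hle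
  have := hle (Submodule.mem_top (x := (1 : PR n k)))
  simp [RingHom.mem_ker] at this

theorem Igr_univ (n k : ℕ) (hk : k ≤ n) [Nontrivial (PR n k ⧸ Igr n k)] :
    IsUnivFact k (Polynomial.X ^ n : Polynomial ℂ) (algebraMap ℂ (PR n k ⧸ Igr n k))
      ((genPoly k fun r => Ideal.Quotient.mk (Igr n k) (pZ n k (r : ℤ))).reflect k)
      ((genPoly (n - k) fun r => Ideal.Quotient.mk (Igr n k) (qZ n k (r : ℤ))).reflect (n - k)) := by
  have hp : ∀ r, k < r → Ideal.Quotient.mk (Igr n k) (pZ n k (r : ℤ)) = 0 := fun r hr => by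
    rw [pZ_big n k r hr, map_zero]
  have hq : ∀ r, n - k < r → Ideal.Quotient.mk (Igr n k) (qZ n k (r : ℤ)) = 0 := fun r hr => by
    rw [qZ_big n k r hr, map_zero]
  have rp := reflect_genPoly k (fun r => Ideal.Quotient.mk (Igr n k) (pZ n k (r : ℤ))) hp
    (by simp [pZ])
  have rq := reflect_genPoly (n - k) (fun r => Ideal.Quotient.mk (Igr n k) (qZ n k (r : ℤ))) hq
    (by simp [qZ])
  refine ⟨rp.1, rq.1, rp.2, ?_, ?_⟩
  · rw [← Polynomial.reflect_mul _ _ (natDegree_genPoly _ _) (natDegree_genPoly _ _)]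
    have : (genPoly k fun r => Ideal.Quotient.mk (Igr n k) (pZ n k (r : ℤ))) *
        (genPoly (n - k) fun r => Ideal.Quotient.mk (Igr n k) (qZ n k (r : ℤ))) = 1 := by
      ext m
      have e : ((genPoly k fun r => Ideal.Quotient.mk (Igr n k) (pZ n k (r : ℤ))) *
        (genPoly (n - k) fun r => Ideal.Quotient.mk (Igr n k) (qZ n k (r : ℤ)))).coeff m =
          Ideal.Quotient.mk (Igr n k) (Rm n k m) := by
        rw [Polynomial.coeff_mul, Rm, map_sum]
        apply Finset.sum_congr rfl
        intro x _
        rw [coeff_genPoly _ _ hp, coeff_genPoly _ _ hq, map_mul]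
      by_cases hm : m ≤ n
      · rw [e]
        rcases Nat.eq_zero_or_pos m with h0 | h0
        · subst h0
          simp [Rm, pZ, qZ]
        · rw [Polynomial.coeff_one, if_neg (by omega), Ideal.Quotient.eq_zero_iff_mem]
          exact Ideal.subset_span ⟨m, by simp; omega, rfl⟩
      · rw [Polynomial.coeff_one, if_neg (by omega)]
        apply Polynomial.coeff_eq_zero_of_natDegree_lt
        refine lt_of_le_of_lt Polynomial.natDegree_mul_le ?_
        have h1 := natDegree_genPoly k fun r => Ideal.Quotient.mk (Igr n k) (pZ n k (r : ℤ))
        have h2 := natDegree_genPoly (n - k) fun r => Ideal.Quotient.mk (Igr n k) (qZ n k (r : ℤ))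
        omega
    rw [this, Polynomial.reflect_one]
    simp [Nat.add_sub_cancel' hk]
  · intro S _ _ ρ g h mg mh dg fac
    have dh : h.natDegree = n - k := by
      have := congrArg Polynomial.natDegree fac
      rw [mg.natDegree_mul mh, dg] at this
      simp at this
      omega
    let φ₀ : PR n k →+* S := MvPolynomial.eval₂Hom ρ (Sum.elim
      (fun i : Fin k => (g.reflect k).coeff (i + 1))
      (fun i : Fin (n - k) => (h.reflect (n - k)).coeff (i + 1)))
    have h1 := hom_pZ n k φ₀ g mg dg (by intro i; simp [φ₀])
    have h2 := hom_qZ n k φ₀ h mh dh (by intro i; simp [φ₀])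
    have hgh : g.reflect k * h.reflect (n - k) = 1 := by
      rw [← Polynomial.reflect_mul _ _ dg.le dh.le, ← fac, Nat.add_sub_cancel' hk]
      simp [Polynomial.reflect_monomial, Polynomial.revAt_le]
    have hker : ∀ a ∈ Igr n k, φ₀ a = 0 := by
      have : Igr n k ≤ RingHom.ker φ₀ := by
        rw [Igr, Ideal.span_le]
        rintro _ ⟨m, hm, rfl⟩
        simp only [Finset.coe_Icc, Set.mem_Icc] at hm
        simp only [SetLike.mem_coe, RingHom.mem_ker, Rm, map_sum, map_mul, h1, h2]
        rw [← Polynomial.coeff_mul, hgh, Polynomial.coeff_one, if_neg (by omega)]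
      exact fun a ha => this ha
    refine ⟨Ideal.Quotient.lift _ φ₀ hker, ⟨?_, ?_, ?_⟩, ?_⟩
    · ext c
      change φ₀ (MvPolynomial.C c) = ρ c
      simp [φ₀]
    · exact eq_of_reflect _ _ _ hp _ (fun r => by rw [Ideal.Quotient.lift_mk, h1])
    · exact eq_of_reflect _ _ _ hq _ (fun r => by rw [Ideal.Quotient.lift_mk, h2])
    · rintro ψ ⟨k1, k2, k3⟩
      apply Ideal.Quotient.ringHom_ext
      apply MvPolynomial.ringHom_ext
      · intro c
        have := RingHom.congr_fun k1 c
        change ψ (Ideal.Quotient.mk _ (MvPolynomial.C c)) = φ₀ (MvPolynomial.C c)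
        simp only [φ₀, MvPolynomial.coe_eval₂Hom, MvPolynomial.eval₂_C]
        exact this
      · rintro (i | i)
        · rw [RingHom.comp_apply, RingHom.comp_apply, Ideal.Quotient.lift_mk, ← pZ_succ, h1, ← k2,
            Polynomial.reflect_map, Polynomial.reflect_reflect, Polynomial.coeff_map,
            coeff_genPoly _ _ hp]
        · rw [RingHom.comp_apply, RingHom.comp_apply, Ideal.Quotient.lift_mk, ← qZ_succ, h2, ← k3,
            Polynomial.reflect_map, Polynomial.reflect_reflect, Polynomial.coeff_map,
            coeff_genPoly _ _ hq]

/-- The quotient `A = P/I` (the cohomology ring of the complex Grassmannian `Gr(k,n)`)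
is a finite-dimensional `ℂ`-vector space of dimension the binomial coefficient `C(n,k)`
(the dimension of the `k`-th exterior power of the standard `n`-dimensional representation). -/
theorem quotient_dimension_choose (n k : ℕ) (hk1 : 1 ≤ k) (hk2 : k ≤ n - 1) :
    FiniteDimensional ℂ (PR n k ⧸ Igr n k)
    ∧ Module.finrank ℂ (PR n k ⧸ Igr n k) = Nat.choose n k := by
  have : Nontrivial (PR n k ⧸ Igr n k) := Ideal.Quotient.nontrivial_iff.2 (Igr_ne_top n k)
  have := IsUnivFact.finrank k (R := ℂ) (A := PR n k ⧸ Igr n k) inferInstance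
    (Polynomial.monic_X_pow n) (by simp) (Igr_univ n k (by omega))
  simpa using this
end
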